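/- The stabilizer of φ, namely the set G₂ = {g ∈ GL(7, ℝ) : φ(g x, g y, g z) = φ(x, y, z) for all x, y, z ∈ ℝ⁷}, is a compact subgroup of GL(7, ℝ). -/

import Mathlib

noncomputable section

open Matrix

/-- `3 × 3` determinant of coordinates `a, b, c` of `(x, y, z)`. -/
def det3 (a b c : Fin 7) (x y z : Fin 7 → ℝ) : ℝ :=
  x a * (y b * z c - y c * z b) - x b * (y a * z c - y c * z a) +
    x c * (y a * z b - y b * z a)

/-- The associative calibration `φ` of Harvey–Lawson on `ℝ⁷`. -/
def phi (x y z : Fin 7 → ℝ) : ℝ :=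
  det3 4 5 6 x y z - det3 4 0 1 x y z - det3 4 2 3 x y z -
    det3 5 0 2 x y z - det3 5 3 1 x y z - det3 6 0 3 x y z - det3 6 1 2 x y z

/-- The stabilizer of `φ` inside `GL(7, ℝ)`. -/
def G2set : Set (GL (Fin 7) ℝ) :=
  {g | ∀ x y z : Fin 7 → ℝ,
    phi ((g : Matrix (Fin 7) (Fin 7) ℝ) *ᵥ x) ((g : Matrix (Fin 7) (Fin 7) ℝ) *ᵥ y)
      ((g : Matrix (Fin 7) (Fin 7) ℝ) *ᵥ z) = phi x y z}

/-!
Let `A_u` be the skew-symmetric matrix of the 2-form `φ(u, ·, ·)`. The double cross product identity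
`u × (u × v) = ⟨u, v⟩ u - |u|² v` says that `A_u² = u uᵀ - |u|²`, and this forces
`det (A_u + x xᵀ)² = |u|⁸ ⟨u, x⟩⁴`. If `g` preserves `φ`, then `gᵀ A_{gu} g = A_u`, hence
`gᵀ (A_{gu} + (gu)(gu)ᵀ) g = A_u + x xᵀ` with `x = gᵀ g u`. Comparing determinants gives
`|det g| |gu|² = |u|²`, that is, `|det g| gᵀ g = 1`; taking determinants again gives `|det g| = 1`.
So the stabilizer of `φ` is a closed subset of the compact group `O(7)`.
-/

section Stabilizer

variable {n R α : Type*} [Fintype n] [DecidableEq n] [CommRing R]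

/-- The subgroup of invertible matrices that preserve a function `F` of three vectors. It is used
for trilinear forms, but neither linearity nor continuity of `F` is built in. -/
def ternaryStabilizer (F : (n → R) → (n → R) → (n → R) → α) : Subgroup (GL n R) where
  carrier := {g | ∀ x y z, F ((g : Matrix n n R) *ᵥ x) ((g : Matrix n n R) *ᵥ y)
    ((g : Matrix n n R) *ᵥ z) = F x y z}
  one_mem' _ _ _ := by simp only [Units.val_one, one_mulVec]
  mul_mem' ha hb x y z := by
    simp only [Units.val_mul, ← mulVec_mulVec, ha _ _ _, hb x y z]
  inv_mem' {a} ha x y z := by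
    simpa only [mulVec_mulVec, Units.mul_inv, one_mulVec] using
      (ha ((a⁻¹ : GL n R).val *ᵥ x) ((a⁻¹ : GL n R).val *ᵥ y) ((a⁻¹ : GL n R).val *ᵥ z)).symm

lemma isClosed_ternaryStabilizer [TopologicalSpace R] [IsTopologicalRing R] [TopologicalSpace α]
    [T2Space α] {F : (n → R) → (n → R) → (n → R) → α}
    (hF : Continuous fun p : (n → R) × (n → R) × (n → R) => F p.1 p.2.1 p.2.2) :
    IsClosed (ternaryStabilizer F : Set (GL n R)) := by
  have mulVec_continuous (x : n → R) : Continuous fun g : GL n R => g.val *ᵥ x :=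
    Units.continuous_val.matrix_mulVec continuous_const
  have eq_iInter : (ternaryStabilizer F : Set (GL n R)) =
      ⋂ x, ⋂ y, ⋂ z, {g | F (g.val *ᵥ x) (g.val *ᵥ y) (g.val *ᵥ z) = F x y z} := by
    ext g
    simp only [Set.mem_iInter]
    rfl
  rw [eq_iInter]
  exact isClosed_iInter fun x => isClosed_iInter fun y => isClosed_iInter fun z =>
    isClosed_eq (hF.comp (.prodMk (mulVec_continuous x)
      (.prodMk (mulVec_continuous y) (mulVec_continuous z)))) continuous_const

end Stabilizer

section UnitaryGroup

variable {n 𝕜 : Type*} [Fintype n] [DecidableEq n] [RCLike 𝕜]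

lemma isCompact_unitaryGroup : IsCompact (unitaryGroup n 𝕜 : Set (Matrix n n 𝕜)) :=
  (isCompact_univ_pi fun _ => isCompact_univ_pi fun _ =>
    isCompact_closedBall (0 : 𝕜) 1).of_isClosed_subset (isClosed_unitary (R := Matrix n n 𝕜))
      fun _ hU i _ j _ => mem_closedBall_zero_iff.2 (entry_norm_bound_of_unitary hU i j)

lemma isCompact_setOf_val_mem_unitaryGroup :
    IsCompact {g : GL n 𝕜 | g.val ∈ unitaryGroup n 𝕜} := by
  have : CompactSpace (unitaryGroup n 𝕜) := isCompact_iff_compactSpace.1 isCompact_unitaryGroup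
  have toUnits_continuous : Continuous (Unitary.toUnits : unitaryGroup n 𝕜 →* GL n 𝕜) :=
    Units.continuous_iff.2 ⟨continuous_subtype_val, continuous_subtype_val.comp continuous_inv⟩
  convert isCompact_range toUnits_continuous
  ext g
  exact ⟨fun hg => ⟨⟨g, hg⟩, Units.ext rfl⟩, by rintro ⟨U, rfl⟩; exact U.2⟩

end UnitaryGroup

section RankOnePerturbation

variable {n K : Type*} [Fintype n] [DecidableEq n] [Field K]

lemma det_one_add_vecMulVec {R : Type*} [CommRing R] (x y : n → R) :
    (1 + vecMulVec x y).det = 1 + y ⬝ᵥ x := by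
  rw [vecMulVec_eq Unit, det_one_add_replicateCol_mul_replicateRow]

lemma det_smul_one_add_vecMulVec {c : K} (hc : c ≠ 0) (x y : n → K) :
    (c • (1 : Matrix n n K) + vecMulVec x y).det = c ^ Fintype.card n * (1 + c⁻¹ * (y ⬝ᵥ x)) := by
  have factor : c • (1 : Matrix n n K) + vecMulVec x y = c • (1 + vecMulVec (c⁻¹ • x) y) := by
    rw [smul_vecMulVec, smul_add, smul_inv_smul₀ hc]
  rw [factor, det_smul, det_one_add_vecMulVec, dotProduct_smul, smul_eq_mul]

lemma det_add_vecMulVec_of_vecMul_eq_zero {A : Matrix n n K} {w p : n → K} (hA : w ᵥ* A = 0)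
    (hp : w ⬝ᵥ p ≠ 0) (x q : n → K) :
    (w ⬝ᵥ p) * (A + vecMulVec x q).det = (w ⬝ᵥ x) * (A + vecMulVec p q).det := by
  set c := w ⬝ᵥ p with hc
  have factor : (1 + vecMulVec (c⁻¹ • (x - p)) w) * (A + vecMulVec p q) = A + vecMulVec x q := by
    rw [add_mul, one_mul, mul_add, vecMulVec_mul, hA, vecMulVec_zero, zero_add,
      vecMulVec_mul_vecMulVec, ← hc, vecMulVec_smul, ← smul_vecMulVec, smul_inv_smul₀ hp,
      add_assoc, ← add_vecMulVec, add_sub_cancel]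
  rw [← factor, det_mul, det_one_add_vecMulVec, dotProduct_smul, dotProduct_sub, ← hc, smul_eq_mul]
  field_simp
  ring

lemma det_add_vecMulVec_self_of_ker {A : Matrix n n K} {u : n → K} (hl : u ᵥ* A = 0)
    (hr : A *ᵥ u = 0) (hu : u ⬝ᵥ u ≠ 0) (x : n → K) :
    (u ⬝ᵥ u) ^ 2 * (A + vecMulVec x x).det = (u ⬝ᵥ x) ^ 2 * (A + vecMulVec u u).det := by
  have columns := det_add_vecMulVec_of_vecMul_eq_zero hl hu x x
  have rows := det_add_vecMulVec_of_vecMul_eq_zero (A := Aᵀ) (by rwa [vecMul_transpose]) hu x u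
  have transpose_add_vecMulVec (y z : n → K) : Aᵀ + vecMulVec y z = (A + vecMulVec z y)ᵀ := by
    rw [transpose_add, transpose_vecMulVec]
  rw [transpose_add_vecMulVec, transpose_add_vecMulVec, det_transpose, det_transpose] at rows
  linear_combination (u ⬝ᵥ u) * columns + (u ⬝ᵥ x) * rows

end RankOnePerturbation

section CrossProductMatrix

/-- `A` has the algebraic properties of the matrix of `u × ·` for a vector cross product: it is
skew-symmetric and satisfies the double cross product identity `u × (u × v) = ⟨u, v⟩ u - |u|² v`. -/
structure IsCrossProductMatrix {n R : Type*} [Fintype n] [DecidableEq n] [CommRing R]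
    (A : Matrix n n R) (u : n → R) : Prop where
  transpose_eq_neg : Aᵀ = -A
  mul_self : A * A = vecMulVec u u - (u ⬝ᵥ u) • 1

variable {n K : Type*} [Fintype n] [DecidableEq n] [Field K] [LinearOrder K]
  [IsStrictOrderedRing K] {A B g : Matrix n n K} {u : n → K}

namespace IsCrossProductMatrix

lemma mulVec_eq_zero (hA : IsCrossProductMatrix A u) : A *ᵥ u = 0 := by
  refine dotProduct_self_eq_zero.1 ?_
  calc (A *ᵥ u) ⬝ᵥ (A *ᵥ u) = -(u ⬝ᵥ (A * A) *ᵥ u) := by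
        rw [← mulVec_mulVec, dotProduct_mulVec u, ← mulVec_transpose, hA.transpose_eq_neg,
          neg_mulVec, neg_dotProduct, neg_neg]
    _ = 0 := by
        rw [hA.mul_self, sub_mulVec, vecMulVec_mulVec, smul_mulVec, one_mulVec, op_smul_eq_smul,
          sub_self, dotProduct_zero, neg_zero]

lemma vecMul_eq_zero (hA : IsCrossProductMatrix A u) : u ᵥ* A = 0 := by
  rw [← mulVec_transpose, hA.transpose_eq_neg, neg_mulVec, hA.mulVec_eq_zero, neg_zero]

lemma det_add_vecMulVec_self_sq (hA : IsCrossProductMatrix A u) (hu : u ≠ 0) :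
    (A + vecMulVec u u).det ^ 2 = (u ⬝ᵥ u) ^ (Fintype.card n + 1) := by
  have norm_ne : u ⬝ᵥ u ≠ 0 := mt dotProduct_self_eq_zero.1 hu
  have mul_transpose_self : (A + vecMulVec u u) * (A + vecMulVec u u)ᵀ =
      (u ⬝ᵥ u) • 1 + vecMulVec ((u ⬝ᵥ u - 1) • u) u := by
    rw [transpose_add, hA.transpose_eq_neg, transpose_vecMulVec, add_mul, mul_add, mul_add,
      mul_neg, mul_neg, hA.mul_self, mul_vecMulVec, hA.mulVec_eq_zero, vecMulVec_mul,
      hA.vecMul_eq_zero, vecMulVec_mul_vecMulVec, zero_vecMulVec, vecMulVec_zero, vecMulVec_smul,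
      smul_vecMulVec, sub_smul, one_smul]
    abel
  calc (A + vecMulVec u u).det ^ 2
      = ((A + vecMulVec u u) * (A + vecMulVec u u)ᵀ).det := by rw [det_mul, det_transpose, sq]
    _ = (u ⬝ᵥ u) ^ (Fintype.card n + 1) := by
      rw [mul_transpose_self, det_smul_one_add_vecMulVec norm_ne, dotProduct_smul, smul_eq_mul]
      field_simp
      ring

lemma det_add_vecMulVec_sq (hA : IsCrossProductMatrix A u) (hu : u ≠ 0) (x : n → K) :
    (u ⬝ᵥ u) ^ 4 * (A + vecMulVec x x).det ^ 2 =
      (u ⬝ᵥ x) ^ 4 * (u ⬝ᵥ u) ^ (Fintype.card n + 1) := by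
  have det_ratio := det_add_vecMulVec_self_of_ker hA.vecMul_eq_zero hA.mulVec_eq_zero
    (mt dotProduct_self_eq_zero.1 hu) x
  calc (u ⬝ᵥ u) ^ 4 * (A + vecMulVec x x).det ^ 2
      = ((u ⬝ᵥ u) ^ 2 * (A + vecMulVec x x).det) ^ 2 := by ring
    _ = (u ⬝ᵥ x) ^ 4 * (A + vecMulVec u u).det ^ 2 := by rw [det_ratio]; ring
    _ = (u ⬝ᵥ x) ^ 4 * (u ⬝ᵥ u) ^ (Fintype.card n + 1) := by rw [hA.det_add_vecMulVec_self_sq hu]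

lemma det_pow_four_mul_dotProduct_pow (hA : IsCrossProductMatrix A u)
    (hB : IsCrossProductMatrix B (g *ᵥ u)) (hBA : gᵀ * B * g = A) (hg : g.det ≠ 0) (hu : u ≠ 0) :
    (u ⬝ᵥ u) ^ 4 * (g.det ^ 4 * (g *ᵥ u ⬝ᵥ g *ᵥ u) ^ (Fintype.card n + 1)) =
      (g *ᵥ u ⬝ᵥ g *ᵥ u) ^ 4 * (u ⬝ᵥ u) ^ (Fintype.card n + 1) := by
  have pullback : gᵀ * (B + vecMulVec (g *ᵥ u) (g *ᵥ u)) * g =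
      A + vecMulVec (gᵀ *ᵥ g *ᵥ u) (gᵀ *ᵥ g *ᵥ u) := by
    rw [mul_add, add_mul, hBA, mul_vecMulVec, vecMulVec_mul, mulVec_transpose]
  have dotProduct_pullback : u ⬝ᵥ gᵀ *ᵥ g *ᵥ u = g *ᵥ u ⬝ᵥ g *ᵥ u := by
    rw [dotProduct_mulVec, vecMul_transpose]
  calc (u ⬝ᵥ u) ^ 4 * (g.det ^ 4 * (g *ᵥ u ⬝ᵥ g *ᵥ u) ^ (Fintype.card n + 1))
      = (u ⬝ᵥ u) ^ 4 * (gᵀ * (B + vecMulVec (g *ᵥ u) (g *ᵥ u)) * g).det ^ 2 := by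
        rw [← hB.det_add_vecMulVec_self_sq (mt (eq_zero_of_mulVec_eq_zero hg) hu), det_mul,
          det_mul, det_transpose]
        ring
    _ = (g *ᵥ u ⬝ᵥ g *ᵥ u) ^ 4 * (u ⬝ᵥ u) ^ (Fintype.card n + 1) := by
        rw [pullback, hA.det_add_vecMulVec_sq hu, dotProduct_pullback]

end IsCrossProductMatrix

end CrossProductMatrix

section Orthogonality

variable {n K : Type*} [Fintype n] [Field K]

lemma eq_of_isSymm_of_dotProduct_mulVec_self_eq [NeZero (2 : K)] {M N : Matrix n n K}
    (hM : M.IsSymm) (hN : N.IsSymm) (h : ∀ u, u ⬝ᵥ M *ᵥ u = u ⬝ᵥ N *ᵥ u) : M = N := by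
  classical
  refine toBilin'.injective (LinearMap.BilinForm.ext_of_isSymm (isSymm_toBilin'_iff_isSymm.2 hM)
    (isSymm_toBilin'_iff_isSymm.2 hN) fun u => ?_)
  simpa only [toBilin'_apply'] using h u

lemma transpose_mul_self_eq_one_of_abs_det_smul [DecidableEq n] [LinearOrder K]
    [IsStrictOrderedRing K] {g : Matrix n n K} (h : |g.det| • (gᵀ * g) = 1) : gᵀ * g = 1 := by
  have det_pow : |g.det| ^ (Fintype.card n + 2) = 1 := by
    rw [pow_add, sq_abs, sq, ← det_one (n := n), ← h, det_smul, det_mul, det_transpose]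
  have abs_det : |g.det| = 1 :=
    (pow_eq_one_iff_of_nonneg (abs_nonneg _) (Nat.succ_ne_zero _)).1 det_pow
  rwa [abs_det, one_smul] at h

end Orthogonality

section Phi

/-- The Gram matrix of the 2-form `φ(u, ·, ·)`, that is, the negative of the matrix of `u × ·` for
the cross product on `ℝ⁷` defined by `⟨u × y, z⟩ = φ(u, y, z)`. -/
def phiMatrix (u : Fin 7 → ℝ) : Matrix (Fin 7) (Fin 7) ℝ :=
  !![0, -u 4, -u 5, -u 6, u 1, u 2, u 3;
     u 4, 0, -u 6, u 5, -u 0, -u 3, u 2;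
     u 5, u 6, 0, -u 4, u 3, -u 0, -u 1;
     u 6, -u 5, u 4, 0, -u 2, u 1, -u 0;
     -u 1, u 0, -u 3, u 2, 0, u 6, -u 5;
     -u 2, u 3, u 0, -u 1, -u 6, 0, u 4;
     -u 3, -u 2, u 1, u 0, u 5, -u 4, 0]

lemma phi_eq_dotProduct_phiMatrix_mulVec (u y z : Fin 7 → ℝ) :
    phi u y z = y ⬝ᵥ phiMatrix u *ᵥ z := by
  simp [phi, det3, phiMatrix, dotProduct, mulVec, Fin.sum_univ_succ]
  ring

lemma transpose_phiMatrix (u : Fin 7 → ℝ) : (phiMatrix u)ᵀ = -phiMatrix u := by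
  ext i j
  fin_cases i <;> fin_cases j <;> simp [phiMatrix]

lemma phiMatrix_mulVec_mulVec (u v : Fin 7 → ℝ) :
    phiMatrix u *ᵥ phiMatrix u *ᵥ v = (u ⬝ᵥ v) • u - (u ⬝ᵥ u) • v := by
  ext i
  fin_cases i <;> simp [phiMatrix, mulVec, dotProduct, Fin.sum_univ_succ] <;> ring

lemma isCrossProductMatrix_phiMatrix (u : Fin 7 → ℝ) : IsCrossProductMatrix (phiMatrix u) u where
  transpose_eq_neg := transpose_phiMatrix u
  mul_self := by
    refine ext_of_mulVec_single fun j => ?_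
    rw [← mulVec_mulVec, phiMatrix_mulVec_mulVec, sub_mulVec, vecMulVec_mulVec, smul_mulVec,
      one_mulVec, op_smul_eq_smul]

lemma continuous_phi : Continuous fun p : (Fin 7 → ℝ) × (Fin 7 → ℝ) × (Fin 7 → ℝ) =>
    phi p.1 p.2.1 p.2.2 := by
  unfold phi det3
  fun_prop

variable {g : GL (Fin 7) ℝ}

lemma transpose_mul_phiMatrix_mul (hg : g ∈ ternaryStabilizer phi) (u : Fin 7 → ℝ) :
    g.valᵀ * phiMatrix (g.val *ᵥ u) * g.val = phiMatrix u := by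
  refine ext_of_mulVec_single fun j => dotProduct_eq _ _ fun v => ?_
  rw [dotProduct_comm _ v, dotProduct_comm _ v, ← phi_eq_dotProduct_phiMatrix_mulVec, ← hg u,
    phi_eq_dotProduct_phiMatrix_mulVec, ← mulVec_mulVec, ← mulVec_mulVec, dotProduct_mulVec v,
    vecMul_transpose]

lemma abs_det_mul_dotProduct_mulVec_self (hg : g ∈ ternaryStabilizer phi) (u : Fin 7 → ℝ) :
    |g.val.det| * (g.val *ᵥ u ⬝ᵥ g.val *ᵥ u) = u ⬝ᵥ u := by
  obtain rfl | hu := eq_or_ne u 0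
  · simp only [mulVec_zero, dotProduct_zero, mul_zero]
  have hdet : g.val.det ≠ 0 := (isUnits_det_units g).ne_zero
  have norm_pos {v : Fin 7 → ℝ} (hv : v ≠ 0) : 0 < v ⬝ᵥ v := by
    simpa only [star_trivial] using dotProduct_star_self_pos_iff.2 hv
  have norm_u_pos := norm_pos hu
  have norm_gu_pos := norm_pos (mt (eq_zero_of_mulVec_eq_zero hdet) hu)
  have det_identity := (isCrossProductMatrix_phiMatrix u).det_pow_four_mul_dotProduct_pow
    (isCrossProductMatrix_phiMatrix (g.val *ᵥ u)) (transpose_mul_phiMatrix_mul hg u) hdet hu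
  rw [Fintype.card_fin] at det_identity
  have fourth_powers : (|g.val.det| * (g.val *ᵥ u ⬝ᵥ g.val *ᵥ u)) ^ 4 = (u ⬝ᵥ u) ^ 4 := by
    rw [mul_pow, Even.pow_abs (by decide)]
    refine mul_left_cancel₀ (mul_ne_zero (pow_ne_zero 4 norm_u_pos.ne')
      (pow_ne_zero 4 norm_gu_pos.ne')) ?_
    linear_combination det_identity
  exact (pow_left_inj₀ (by positivity) norm_u_pos.le four_ne_zero).1 fourth_powers

lemma mem_unitaryGroup_of_mem_ternaryStabilizer_phi (hg : g ∈ ternaryStabilizer phi) :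
    g.val ∈ unitaryGroup (Fin 7) ℝ := by
  have scaled_orthogonal : |g.val.det| • (g.valᵀ * g.val) = 1 := by
    refine eq_of_isSymm_of_dotProduct_mulVec_self_eq ((isSymm_transpose_mul_self _).smul _)
      isSymm_one fun u => ?_
    rw [one_mulVec, smul_mulVec, dotProduct_smul, ← mulVec_mulVec, dotProduct_mulVec u,
      vecMul_transpose, smul_eq_mul, abs_det_mul_dotProduct_mulVec_self hg]
  exact mem_unitaryGroup_iff'.2 (transpose_mul_self_eq_one_of_abs_det_smul scaled_orthogonal)

end Phi

/-- The stabilizer `G₂ = {g ∈ GL(7, ℝ) : g⋅φ = φ}` is a compact subgroup of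
`GL(7, ℝ)`. -/
theorem G2_compact_subgroup :
    (∃ H : Subgroup (GL (Fin 7) ℝ), (H : Set (GL (Fin 7) ℝ)) = G2set) ∧
      IsCompact G2set := by
  have carrier_eq : (ternaryStabilizer phi : Set (GL (Fin 7) ℝ)) = G2set := rfl
  refine ⟨⟨ternaryStabilizer phi, carrier_eq⟩, ?_⟩
  rw [← carrier_eq]
  exact isCompact_setOf_val_mem_unitaryGroup.of_isClosed_subset
    (isClosed_ternaryStabilizer continuous_phi)
    fun _ hg => mem_unitaryGroup_of_mem_ternaryStabilizer_phi hg
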